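/- Let γ > 0 and 1 < β ≤ 2, and set a_n = ⌊e^{γ(log n)^β}⌋ for n ≥ 1. Then for Lebesgue-almost all real α, for every ε > 0 there are infinitely many N with N·D_N*({a_1 α}, …, {a_N α}) ≥ N^{7/26 − ε}. -/

import Mathlib

/-!
By Koksma's inequality, `N D_N` dominates every exponential sum over the first `N` points, so it is
enough to exhibit, for almost every `α`, a frequency `h` and infinitely many blocks `[M, M + H)` on
which `∑ e(h a_n α)` has size at least `√(H / 2)`. Over `α`, the square of a block sum with `h = 1`
has mean `H`, and its second moment counts the additive quadruples of the block. If there are only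
`6 H ^ 2` of these, the Paley–Zygmund inequality makes the block sum large on a set of measure at
least `1 / 24`; hence the set of `α` with infinitely many large block sums has positive measure, and
by ergodicity of the doubling map almost every `α` is moved into it by some `h = 2 ^ k`.

Apart from trivial solutions and symmetries, an additive quadruple is a solution of
`a_p + a_t = a_q + a_r` with `p < q ≤ r < t`. Suppose that the increments of `a` are increasing and
log-concave, and that the second differences of their logarithms are at least `-η`. If `p`, `q`, `r`
are translated by `s > 0`, log-concavity forces the new fourth index to lie beyond `t + s`, but the
lower bound lets the gap `a_t - a_r` grow only by a factor `exp (H ^ 2 η)`, too little to reach the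
next index when `H ^ 3 η < 1`. So `q - p` and `r - p` determine the quadruple. For
`a_n = ⌊exp (γ (log n) ^ β)⌋` one may take `η = M ^ (-2 + o(1))`, which allows any block length
`H = M ^ σ` with `σ < 2 / 3`, and therefore any discrepancy exponent below `1 / 3`.
-/

open Filter MeasureTheory

/-- Star-discrepancy of the first `N` points `x 1, ..., x N` of a sequence in `[0,1)`. -/
noncomputable def starDisc (N : ℕ) (x : ℕ → ℝ) : ℝ :=
  ⨆ β : Set.Ioc (0:ℝ) 1,
    |(((Finset.Icc 1 N).filter fun n => 0 ≤ x n ∧ x n < (β : ℝ)).card : ℝ) / N - (β : ℝ)|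

open scoped fwdDiff

section AdditiveQuadruples

variable {ι G : Type*}

theorem add_eq_add_cases [LinearOrder ι] [AddCommGroup G] [LinearOrder G]
    [IsOrderedAddMonoid G] {a : ι → G} {s : Set ι} (ha : StrictMonoOn a s) {m n k l : ι}
    (hm : m ∈ s) (hn : n ∈ s) (hk : k ∈ s) (hl : l ∈ s) (heq : a m + a n = a k + a l) :
    (m = k ∧ n = l) ∨ (m = l ∧ n = k) ∨
      (m < k ∧ m < l ∧ k < n ∧ l < n) ∨ (n < k ∧ n < l ∧ k < m ∧ l < m) ∨
      (k < m ∧ k < n ∧ m < l ∧ n < l) ∨ (l < m ∧ l < n ∧ m < k ∧ n < k) := by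
  have lt_iff {x y x' y' : ι} (hx : x ∈ s) (hy : y ∈ s) (hx' : x' ∈ s) (hy' : y' ∈ s)
      (h : a x + a x' = a y + a y') : x < y ↔ y' < x' := by
    rw [← ha.lt_iff_lt hx hy, ← ha.lt_iff_lt hy' hx', ← sub_neg,
      sub_eq_sub_iff_add_eq_add.2 (h.trans (add_comm _ _)), sub_neg]
  have heq' : a m + a n = a l + a k := heq.trans (add_comm _ _)
  have := lt_iff hm hk hn hl heq
  have := lt_iff hm hl hn hk heq'
  have := lt_iff hk hm hl hn heq.symm
  have := lt_iff hl hm hk hn heq'.symm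
  rcases lt_trichotomy m k with h | h | h <;> rcases lt_trichotomy m l with h' | h' | h' <;> grind

open scoped Classical in
/-- The solutions of `a m + a n = a k + a l` with indices in `s`, encoded as `((m, n), (k, l))`. -/
noncomputable def additiveQuadruples [Add G] (s : Finset ι) (a : ι → G) :
    Finset ((ι × ι) × (ι × ι)) :=
  {x ∈ (s ×ˢ s) ×ˢ (s ×ˢ s) | a x.1.1 + a x.1.2 = a x.2.1 + a x.2.2}

theorem mem_additiveQuadruples [Add G] {s : Finset ι} {a : ι → G} {m n k l : ι} :
    ((m, n), (k, l)) ∈ additiveQuadruples s a ↔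
      ((m ∈ s ∧ n ∈ s) ∧ k ∈ s ∧ l ∈ s) ∧ a m + a n = a k + a l := by
  simp only [additiveQuadruples, Finset.mem_filter, Finset.mem_product]

/-- The additive quadruples `((p, t), (q, r))` with `q` and `r` strictly between `p` and `t`. -/
noncomputable def nestedQuadruples [LinearOrder ι] [Add G] (s : Finset ι) (a : ι → G) :
    Finset ((ι × ι) × (ι × ι)) :=
  {x ∈ additiveQuadruples s a | x.1.1 < x.2.1 ∧ x.1.1 < x.2.2 ∧ x.2.1 < x.1.2 ∧ x.2.2 < x.1.2}

theorem mem_nestedQuadruples [LinearOrder ι] [Add G] {s : Finset ι} {a : ι → G} {p t q r : ι} :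
    ((p, t), (q, r)) ∈ nestedQuadruples s a ↔
      (((p ∈ s ∧ t ∈ s) ∧ q ∈ s ∧ r ∈ s) ∧ a p + a t = a q + a r) ∧
        p < q ∧ p < r ∧ q < t ∧ r < t := by
  rw [nestedQuadruples, Finset.mem_filter, mem_additiveQuadruples]

theorem card_additiveQuadruples_le_of_strictMonoOn [LinearOrder ι] [AddCommGroup G]
    [LinearOrder G] [IsOrderedAddMonoid G] {s : Finset ι} {a : ι → G} (ha : StrictMonoOn a s) :
    (additiveQuadruples s a).card ≤ 2 * s.card ^ 2 + 4 * (nestedQuadruples s a).card := by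
  classical
  let diagonal := (s ×ˢ s).image fun x : ι × ι => (x, x)
  let antidiagonal := (s ×ˢ s).image fun x : ι × ι => (x, x.swap)
  let N := nestedQuadruples s a
  have cover : additiveQuadruples s a ⊆ diagonal ∪ antidiagonal ∪ N ∪
      N.image (fun x => (x.1.swap, x.2)) ∪ N.image Prod.swap ∪
      N.image (fun x => (x.2, x.1.swap)) := by
    rintro ⟨⟨m, n⟩, ⟨k, l⟩⟩ h
    obtain ⟨⟨⟨hm, hn⟩, hk, hl⟩, heq⟩ := mem_additiveQuadruples.1 h
    simp only [diagonal, antidiagonal, N, Finset.mem_union, Finset.mem_image, Finset.mem_product,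
      Prod.exists, mem_nestedQuadruples, Prod.swap_prod_mk, Prod.mk.injEq]
    rcases add_eq_add_cases ha hm hn hk hl heq with h | h | h | h | h | h <;> grind
  have card_diagonal : diagonal.card ≤ s.card ^ 2 :=
    Finset.card_image_le.trans (by rw [Finset.card_product, pow_two])
  have card_antidiagonal : antidiagonal.card ≤ s.card ^ 2 :=
    Finset.card_image_le.trans (by rw [Finset.card_product, pow_two])
  have card_image (f : (ι × ι) × (ι × ι) → (ι × ι) × (ι × ι)) : (N.image f).card ≤ N.card :=
    Finset.card_image_le
  refine (Finset.card_le_card cover).trans (?_ : _ ≤ 2 * s.card ^ 2 + 4 * N.card)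
  grw [Finset.card_union_le, Finset.card_union_le, Finset.card_union_le, Finset.card_union_le,
    Finset.card_union_le, card_diagonal, card_antidiagonal, card_image, card_image, card_image]
  omega

end AdditiveQuadruples

section ExponentialSums

variable {ι : Type*}

theorem integrable_fourier (n : ℤ) : Integrable (fun x : UnitAddCircle => fourier n x) :=
  (fourier n).continuous.integrable_of_hasCompactSupport (HasCompactSupport.of_compactSpace _)

theorem integral_fourier (n : ℤ) :
    ∫ x : UnitAddCircle, fourier n x = if n = 0 then 1 else 0 := by
  have h := congrFun (fourierCoeff_fourier (T := 1) n) 0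
  simp only [fourierCoeff, neg_zero, fourier_zero, one_smul, AddCircle.integral_haarAddCircle,
    inv_one, Pi.single_apply] at h
  rw [h]
  simp only [eq_comm]

theorem integral_norm_sq_sum_fourier (s : Finset ι) (k : ι → ℤ) :
    ∫ x : UnitAddCircle, ‖∑ i ∈ s, (fourier (k i) x : ℂ)‖ ^ 2 =
      {p ∈ s ×ˢ s | k p.1 = k p.2}.card := by
  have norm_sq_eq (x : UnitAddCircle) : ((‖∑ i ∈ s, (fourier (k i) x : ℂ)‖ ^ 2 : ℝ) : ℂ) =
      ∑ p ∈ s ×ˢ s, fourier (k p.1 - k p.2) x := by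
    rw [Complex.ofReal_pow, ← Complex.mul_conj', map_sum, Finset.sum_mul_sum, Finset.sum_product]
    simp only [sub_eq_add_neg, fourier_add, fourier_neg]
  apply Complex.ofReal_injective
  rw [← integral_complex_ofReal]
  simp only [norm_sq_eq,
    integral_finsetSum (s ×ˢ s) fun (p : ι × ι) _ => integrable_fourier (k p.1 - k p.2),
    integral_fourier, sub_eq_zero, Finset.sum_boole, Complex.ofReal_natCast]

theorem integral_norm_sq_sum_fourier_of_injOn {s : Finset ι} {k : ι → ℤ} (hk : Set.InjOn k s) :
    ∫ x : UnitAddCircle, ‖∑ i ∈ s, (fourier (k i) x : ℂ)‖ ^ 2 = s.card := by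
  classical
  have collisions_eq_diag : {p ∈ s ×ˢ s | k p.1 = k p.2} = s.diag := by
    rw [Finset.diag_eq_filter]
    refine Finset.filter_congr fun p hp => ?_
    exact hk.eq_iff (Finset.mem_product.1 hp).1 (Finset.mem_product.1 hp).2
  rw [integral_norm_sq_sum_fourier, collisions_eq_diag, Finset.diag_card]

theorem integral_norm_sq_sq_sum_fourier (s : Finset ι) (k : ι → ℤ) :
    ∫ x : UnitAddCircle, (‖∑ i ∈ s, (fourier (k i) x : ℂ)‖ ^ 2) ^ 2 =
      (additiveQuadruples s k).card := by
  convert integral_norm_sq_sum_fourier (s ×ˢ s) fun p => k p.1 + k p.2 using 3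
  · simp only [← norm_pow, pow_two (∑ _ ∈ s, _), Finset.sum_mul_sum,
      Finset.sum_product, fourier_add]
  · rw [additiveQuadruples]
    congr!

end ExponentialSums

section StarDiscrepancy

theorem starDisc_congr {N : ℕ} {x y : ℕ → ℝ} (h : ∀ n ∈ Finset.Icc 1 N, x n = y n) :
    starDisc N x = starDisc N y := by
  unfold starDisc
  have filter_eq (β : ℝ) : (Finset.Icc 1 N).filter (fun n => 0 ≤ x n ∧ x n < β) =
      (Finset.Icc 1 N).filter fun n => 0 ≤ y n ∧ y n < β :=
    Finset.filter_congr fun n hn => by rw [h n hn]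
  simp only [filter_eq]

theorem starDisc_nonneg (N : ℕ) (x : ℕ → ℝ) : 0 ≤ starDisc N x :=
  Real.iSup_nonneg fun _ => abs_nonneg _

theorem abs_card_sub_mul_le_mul_starDisc (N : ℕ) (x : ℕ → ℝ) {t : ℝ} (ht : t ∈ Set.Ioc (0 : ℝ) 1) :
    |(((Finset.Icc 1 N).filter fun n => 0 ≤ x n ∧ x n < t).card : ℝ) - N * t| ≤
      N * starDisc N x := by
  rcases N.eq_zero_or_pos with rfl | hN
  · simp
  have ratio_le (s : ℝ) :
      (((Finset.Icc 1 N).filter fun n => 0 ≤ x n ∧ x n < s).card : ℝ) / N ≤ 1 :=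
    div_le_one_of_le₀ (mod_cast (Finset.card_filter_le _ _).trans (by simp)) N.cast_nonneg
  have bounded : BddAbove (Set.range fun β : Set.Ioc (0:ℝ) 1 =>
      |(((Finset.Icc 1 N).filter fun n => 0 ≤ x n ∧ x n < (β : ℝ)).card : ℝ) / N - (β : ℝ)|) := by
    refine ⟨1, ?_⟩
    rintro _ ⟨β, rfl⟩
    exact abs_sub_le_of_nonneg_of_le (by positivity) (ratio_le β) β.2.1.le β.2.2
  calc _ = N * |(((Finset.Icc 1 N).filter fun n => 0 ≤ x n ∧ x n < t).card : ℝ) / N - t| := by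
        rw [← Nat.abs_cast N, ← abs_mul, Nat.abs_cast]
        field_simp
    _ ≤ N * starDisc N x := by
        gcongr
        exact le_ciSup bounded ⟨t, ht⟩

variable {E : Type*} [NormedAddCommGroup E] [NormedSpace ℝ E] [CompleteSpace E] {f f' : ℝ → E}

theorem sub_integral_eq_integral_smul_deriv (hf : ∀ t ∈ Set.Icc (0 : ℝ) 1, HasDerivAt f (f' t) t)
    (hf' : ContinuousOn f' (Set.Icc 0 1)) {x : ℝ} (hx : x ∈ Set.Icc (0 : ℝ) 1) :
    f x - ∫ t in (0 : ℝ)..1, f t =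
      ∫ t in (0 : ℝ)..1, (t - if x < t then 1 else 0 : ℝ) • f' t := by
  rw [← Set.uIcc_of_le zero_le_one] at hf hf'
  have integrable_deriv : IntervalIntegrable f' volume 0 1 := hf'.intervalIntegrable
  have integral_below : ∫ t in (0 : ℝ)..1, {t | t ≤ x}.indicator f' t = f x - f 0 := by
    have subset : Set.uIcc 0 x ⊆ Set.uIcc (0 : ℝ) 1 :=
      Set.uIcc_subset_uIcc_left (Set.Icc_subset_uIcc hx)
    rw [intervalIntegral.integral_indicator hx]
    exact intervalIntegral.integral_eq_sub_of_hasDerivAt (fun t ht => hf t (subset ht))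
      (hf'.mono subset).intervalIntegrable
  have integral_by_parts : ∫ t in (0 : ℝ)..1, (t - 1) • f' t = f 0 - ∫ t in (0 : ℝ)..1, f t := by
    rw [intervalIntegral.integral_smul_deriv_eq_deriv_smul
      (fun t _ => (hasDerivAt_id' t).sub_const 1) hf intervalIntegrable_const integrable_deriv]
    simp
  have split_kernel (t : ℝ) : (t - if x < t then 1 else 0 : ℝ) • f' t =
      {t | t ≤ x}.indicator f' t + (t - 1) • f' t := by
    by_cases h : x < t
    · simp [h]
    · simp [h, not_lt.1 h, sub_smul]
  have integrable_indicator : IntervalIntegrable ({t | t ≤ x}.indicator f') volume 0 1 :=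
    ⟨integrable_deriv.1.indicator measurableSet_Iic, integrable_deriv.2.indicator measurableSet_Iic⟩
  simp only [split_kernel]
  rw [intervalIntegral.integral_add integrable_indicator
    (integrable_deriv.continuousOn_smul (by fun_prop)), integral_below, integral_by_parts]
  abel

theorem koksma {C : ℝ} (hf : ∀ t ∈ Set.Icc (0 : ℝ) 1, HasDerivAt f (f' t) t)
    (hf' : ContinuousOn f' (Set.Icc 0 1)) (hC : ∀ t ∈ Set.Icc (0 : ℝ) 1, ‖f' t‖ ≤ C)
    {N : ℕ} {x : ℕ → ℝ} (hx : ∀ n, x n ∈ Set.Ico (0 : ℝ) 1) :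
    ‖∑ n ∈ Finset.Icc 1 N, f (x n) - (N : ℝ) • ∫ t in (0 : ℝ)..1, f t‖ ≤
      C * (N * starDisc N x) := by
  have sum_kernel (t : ℝ) : ∑ n ∈ Finset.Icc 1 N, (t - if x n < t then 1 else 0 : ℝ) =
      -(((Finset.Icc 1 N).filter fun n => 0 ≤ x n ∧ x n < t).card - N * t) := by
    simp [Finset.sum_sub_distrib, Finset.sum_boole, (hx _).1]
  have integrable_deriv : IntervalIntegrable f' volume 0 1 :=
    ContinuousOn.intervalIntegrable (by rwa [Set.uIcc_of_le zero_le_one])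
  have integrable_kernel (n : ℕ) : IntervalIntegrable
      (fun t : ℝ => (t - if x n < t then 1 else 0 : ℝ) • f' t) volume 0 1 := by
    simp only [sub_smul, ite_smul, one_smul, zero_smul]
    exact (integrable_deriv.continuousOn_smul continuousOn_id).sub
      ⟨integrable_deriv.1.indicator measurableSet_Ioi,
        integrable_deriv.2.indicator measurableSet_Ioi⟩
  have error_eq : ∑ n ∈ Finset.Icc 1 N, f (x n) - (N : ℝ) • ∫ t in (0 : ℝ)..1, f t =
      ∫ t in (0 : ℝ)..1, (∑ n ∈ Finset.Icc 1 N, (t - if x n < t then 1 else 0 : ℝ)) • f' t := by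
    simp only [Finset.sum_smul]
    rw [intervalIntegral.integral_finsetSum fun n _ => integrable_kernel n]
    simp only [← sub_integral_eq_integral_smul_deriv hf hf' (Set.Ico_subset_Icc_self (hx _)),
      Finset.sum_sub_distrib, Finset.sum_const, Nat.card_Icc, Nat.add_sub_cancel,
      Nat.cast_smul_eq_nsmul]
  rw [error_eq]
  refine (intervalIntegral.norm_integral_le_of_norm_le_const
    (C := C * (N * starDisc N x)) fun t ht => ?_).trans (by simp)
  rw [Set.uIoc_of_le zero_le_one] at ht
  have deriv_le := hC t (Set.Ioc_subset_Icc_self ht)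
  rw [sum_kernel, norm_smul, norm_neg, Real.norm_eq_abs, mul_comm]
  exact mul_le_mul deriv_le (abs_card_sub_mul_le_mul_starDisc N x ht) (abs_nonneg _)
    ((norm_nonneg _).trans deriv_le)

theorem norm_sum_fourier_le_mul_starDisc {h : ℤ} (hh : h ≠ 0) {N : ℕ} {x : ℕ → ℝ}
    (hx : ∀ n, x n ∈ Set.Ico (0 : ℝ) 1) :
    ‖∑ n ∈ Finset.Icc 1 N, (fourier h (x n : UnitAddCircle) : ℂ)‖ ≤
      2 * Real.pi * |h| * (N * starDisc N x) := by
  have mean_zero : ∫ t in (0 : ℝ)..1, (fourier h (t : UnitAddCircle) : ℂ) = 0 := by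
    simpa only [zero_add, integral_fourier, if_neg hh] using
      UnitAddCircle.intervalIntegral_preimage 0 fun x => (fourier h x : ℂ)
  have deriv_norm (t : ℝ) :
      ‖2 * Real.pi * Complex.I * h / (1 : ℝ) * (fourier h (t : UnitAddCircle) : ℂ)‖ ≤
        2 * Real.pi * |h| := by
    rw [norm_mul, fourier_apply, Circle.norm_coe]
    simp [abs_of_pos Real.pi_pos]
  simpa only [mean_zero, smul_zero, sub_zero] using
    koksma (N := N) (fun t _ => hasDerivAt_fourier 1 h t) (Continuous.continuousOn (by fun_prop))
      (fun t _ => deriv_norm t) hx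

end StarDiscrepancy

section SecondMoment

variable {Ω : Type*} [MeasurableSpace Ω] {μ : Measure Ω}

theorem sq_setIntegral_le [IsFiniteMeasure μ] {f : Ω → ℝ} (hf : MemLp f 2 μ) (s : Set Ω) :
    (∫ x in s, f x ∂μ) ^ 2 ≤ (∫ x, f x ^ 2 ∂μ) * μ.real s := by
  have integrable_f : Integrable f μ := hf.integrable one_le_two
  have quadratic_nonneg (c : ℝ) :
      0 ≤ μ.real s * (c * c) + (-2 * ∫ x in s, f x ∂μ) * c + ∫ x, f x ^ 2 ∂μ := by
    have integral_sq : ∫ x in s, (f x - c) ^ 2 ∂μ =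
        (∫ x in s, f x ^ 2 ∂μ) - 2 * c * (∫ x in s, f x ∂μ) + μ.real s * c ^ 2 := by
      have integrable_sq : IntegrableOn (fun x => f x ^ 2) s μ := hf.integrable_sq.integrableOn
      have integrable_mul : IntegrableOn (fun x => 2 * c * f x) s μ :=
        integrable_f.integrableOn.const_mul _
      have expand (x : Ω) : (f x - c) ^ 2 = f x ^ 2 - 2 * c * f x + c ^ 2 := by ring
      have integral_linear := integral_sub integrable_sq integrable_mul
      have integral_quadratic := integral_add (integrable_sq.sub integrable_mul)
        (integrable_const (c ^ 2))
      simp only [Pi.sub_apply] at integral_quadratic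
      simp only [expand, integral_quadratic, integral_linear, integral_const_mul,
        setIntegral_const, smul_eq_mul]
    have setIntegral_le : ∫ x in s, f x ^ 2 ∂μ ≤ ∫ x, f x ^ 2 ∂μ :=
      setIntegral_le_integral hf.integrable_sq (Eventually.of_forall fun x => sq_nonneg (f x))
    have : 0 ≤ ∫ x in s, (f x - c) ^ 2 ∂μ := integral_nonneg fun x => sq_nonneg _
    linarith
  have := discrim_le_zero quadratic_nonneg
  rw [discrim] at this
  linarith

theorem paley_zygmund [IsProbabilityMeasure μ] {f : Ω → ℝ} (hf : MemLp f 2 μ)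
    (hmean : 0 ≤ ∫ x, f x ∂μ) {θ : ℝ} (hθ : θ ∈ Set.Icc (0 : ℝ) 1) :
    (1 - θ) ^ 2 * (∫ x, f x ∂μ) ^ 2 ≤
      (∫ x, f x ^ 2 ∂μ) * μ.real {x | θ * ∫ y, f y ∂μ ≤ f x} := by
  let s : Set Ω := {x | θ * ∫ y, f y ∂μ ≤ f x}
  have measurable_s : NullMeasurableSet s μ :=
    nullMeasurableSet_le aemeasurable_const hf.aestronglyMeasurable.aemeasurable
  have integrable_f : Integrable f μ := hf.integrable one_le_two
  have threshold_nonneg : 0 ≤ θ * ∫ x, f x ∂μ := mul_nonneg hθ.1 hmean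
  have compl_le : ∫ x in sᶜ, f x ∂μ ≤ θ * ∫ x, f x ∂μ :=
    calc ∫ x in sᶜ, f x ∂μ ≤ ∫ _ in sᶜ, θ * ∫ y, f y ∂μ ∂μ :=
          setIntegral_mono_on₀ integrable_f.integrableOn (integrableOn_const (by finiteness))
            measurable_s.compl fun x hx => le_of_not_ge hx
      _ = μ.real sᶜ * (θ * ∫ x, f x ∂μ) := by rw [setIntegral_const, smul_eq_mul]
      _ ≤ θ * ∫ x, f x ∂μ := mul_le_of_le_one_left threshold_nonneg measureReal_le_one
  have mean_le : (1 - θ) * ∫ x, f x ∂μ ≤ ∫ x in s, f x ∂μ := by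
    linarith [integral_add_compl₀ measurable_s integrable_f]
  calc (1 - θ) ^ 2 * (∫ x, f x ∂μ) ^ 2 = ((1 - θ) * ∫ x, f x ∂μ) ^ 2 := (mul_pow _ _ _).symm
    _ ≤ (∫ x in s, f x ∂μ) ^ 2 :=
        pow_le_pow_left₀ (mul_nonneg (sub_nonneg.2 hθ.2) hmean) mean_le 2
    _ ≤ _ := sq_setIntegral_le hf s

theorem setOf_frequently_mem {X : Type*} (A : ℕ → Set X) :
    {x | ∃ᶠ k in atTop, x ∈ A k} = ⋂ n : ℕ, ⋃ k ≥ n, A k := by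
  ext x
  simp only [frequently_atTop, Set.mem_ofPred_eq, Set.mem_iInter, Set.mem_iUnion, exists_prop]

theorem measurableSet_frequently_mem {A : ℕ → Set Ω} (hA : ∀ k, MeasurableSet (A k)) :
    MeasurableSet {x | ∃ᶠ k in atTop, x ∈ A k} := by
  rw [setOf_frequently_mem]
  exact MeasurableSet.iInter fun n => MeasurableSet.biUnion (Set.to_countable _) fun k _ => hA k

theorem le_measure_frequently [IsFiniteMeasure μ] {A : ℕ → Set Ω} (hA : ∀ k, MeasurableSet (A k))
    {c : ENNReal} (hc : ∀ᶠ k in atTop, c ≤ μ (A k)) : c ≤ μ {x | ∃ᶠ k in atTop, x ∈ A k} := by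
  have tendsto_tail : Tendsto (fun n : ℕ => μ (⋃ k ≥ n, A k)) atTop
      (nhds (μ (⋂ n : ℕ, ⋃ k ≥ n, A k))) :=
    tendsto_measure_iInter_atTop
      (fun n => (MeasurableSet.biUnion (Set.to_countable _) fun k _ => hA k).nullMeasurableSet)
      (fun m n hmn => Set.biUnion_subset_biUnion_left fun k hk => le_trans hmn hk)
      ⟨0, measure_ne_top _ _⟩
  rw [setOf_frequently_mem]
  refine ge_of_tendsto tendsto_tail ?_
  filter_upwards [hc] with n hn
  exact hn.trans (measure_mono (Set.subset_biUnion_of_mem (u := A) (le_refl n)))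

theorem ae_exists_iterate_mem_of_ergodic [IsFiniteMeasure μ] {T : Ω → Ω} (hT : Ergodic T μ)
    {E : Set Ω} (hE : MeasurableSet E) (hμE : μ E ≠ 0) : ∀ᵐ x ∂μ, ∃ k, T^[k] x ∈ E := by
  have measurable_visits : MeasurableSet (⋃ k, T^[k] ⁻¹' E) :=
    MeasurableSet.iUnion fun k => (hT.measurable.iterate k) hE
  have preimage_subset : T ⁻¹' (⋃ k, T^[k] ⁻¹' E) ⊆ ⋃ k, T^[k] ⁻¹' E := by
    intro x hx
    obtain ⟨k, hk⟩ := Set.mem_iUnion.1 hx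
    exact Set.mem_iUnion.2 ⟨k + 1, hk⟩
  have subset_visits : E ⊆ ⋃ k, T^[k] ⁻¹' E := Set.subset_iUnion (fun k => T^[k] ⁻¹' E) 0
  rcases hT.ae_empty_or_univ_of_preimage_ae_le measurable_visits.nullMeasurableSet
    preimage_subset.eventuallyLE with h | h
  · exact absurd (measure_mono_null subset_visits (ae_eq_empty.1 h)) hμE
  · filter_upwards [eventuallyEq_univ.1 h] with x hx
    exact Set.mem_iUnion.1 hx

theorem ae_real_of_ae_unitAddCircle {P : UnitAddCircle → Prop} (h : ∀ᵐ x : UnitAddCircle, P x) :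
    ∀ᵐ α : ℝ, P (α : UnitAddCircle) := by
  have on_period (n : ℤ) : ∀ᵐ α : ℝ ∂(volume.restrict (Set.Ioc (n : ℝ) (n + 1))),
      P (α : UnitAddCircle) :=
    (UnitAddCircle.measurePreserving_mk (n : ℝ)).quasiMeasurePreserving.ae h
  rw [← Measure.restrict_univ (μ := (volume : Measure ℝ)), ← iUnion_Ioc_intCast,
    ae_restrict_iUnion_iff]
  exact on_period

theorem ae_frequently_of_le_measureReal {E : ℕ → Set UnitAddCircle}
    (hE : ∀ M, MeasurableSet (E M)) {c : ℝ} (hc : 0 < c)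
    (hle : ∀ᶠ M in atTop, c ≤ (volume : Measure UnitAddCircle).real (E M)) :
    ∀ᵐ α : ℝ, ∃ k : ℕ, ∃ᶠ M in atTop, 2 ^ k • (α : UnitAddCircle) ∈ E M := by
  have measurable_frequently : MeasurableSet {x | ∃ᶠ M in atTop, x ∈ E M} :=
    measurableSet_frequently_mem hE
  have measure_pos : ENNReal.ofReal c ≤ volume {x | ∃ᶠ M in atTop, x ∈ E M} :=
    le_measure_frequently hE <| hle.mono fun M hM =>
      (ENNReal.ofReal_le_iff_le_toReal (measure_ne_top _ _)).2 hM
  refine ae_real_of_ae_unitAddCircle (P := fun x => ∃ k, ∃ᶠ M in atTop, 2 ^ k • x ∈ E M) ?_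
  filter_upwards [ae_exists_iterate_mem_of_ergodic (AddCircle.ergodic_nsmul one_lt_two)
    measurable_frequently ((ENNReal.ofReal_pos.2 hc).trans_le measure_pos).ne'] with x ⟨k, hk⟩
  exact ⟨k, by simpa only [smul_iterate] using hk⟩

end SecondMoment

section ForwardDifferences

variable {G : Type*} [AddCommGroup G]

theorem sum_Ico_fwdDiff_add (A : ℕ → G) {m n : ℕ} (hmn : m ≤ n) (s : ℕ) :
    ∑ i ∈ Finset.Ico m n, Δ_[1] A (i + s) = A (n + s) - A (m + s) := by
  simp only [← Finset.sum_Ico_sub (fun i => A (i + s)) hmn, fwdDiff, add_right_comm _ s 1]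

theorem sum_Ico_fwdDiff (A : ℕ → G) {m n : ℕ} (hmn : m ≤ n) :
    ∑ i ∈ Finset.Ico m n, Δ_[1] A i = A n - A m :=
  Finset.sum_Ico_sub A hmn

theorem sum_sum_fwdDiff_fwdDiff (l : ℕ → G) {i j : ℕ} (hij : i ≤ j) (s : ℕ) :
    ∑ u ∈ Finset.Ico i j, ∑ v ∈ Finset.Ico 0 s, Δ_[1] (Δ_[1] l) (v + u) =
      l (j + s) - l j - (l (i + s) - l i) := by
  have inner_sum (u : ℕ) : ∑ v ∈ Finset.Ico 0 s, Δ_[1] (Δ_[1] l) (v + u) =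
      Δ_[1] l (u + s) - Δ_[1] l u := by
    rw [sum_Ico_fwdDiff_add _ s.zero_le, zero_add, add_comm]
  simp only [inner_sum, Finset.sum_sub_distrib, sum_Ico_fwdDiff_add l hij, sum_Ico_fwdDiff l hij]
  abel

theorem fwdDiff_natCast {R : Type*} [AddCommMonoidWithOne R] (F : R → G) (n : ℕ) :
    Δ_[1] (fun k : ℕ => F k) n = Δ_[1] F (n : R) := by
  simp only [fwdDiff, Nat.cast_add, Nat.cast_one]

variable {F F' F'' : ℝ → ℝ} {x : ℝ}

theorem hasDerivAt_fwdDiff (h : ∀ y ≥ x, HasDerivAt F (F' y) y) :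
    ∀ y ≥ x, HasDerivAt (Δ_[1] F) (Δ_[1] F' y) y := fun y hy =>
  ((h (y + 1) (by linarith)).comp_add_const y 1).sub (h y hy)

theorem exists_fwdDiff_eq (h : ∀ y ≥ x, HasDerivAt F (F' y) y) :
    ∃ ξ ∈ Set.Ioo x (x + 1), Δ_[1] F x = F' ξ := by
  obtain ⟨ξ, hξ, heq⟩ := exists_hasDerivAt_eq_slope F F' (lt_add_one x)
    (fun y hy => (h y hy.1).continuousAt.continuousWithinAt) fun y hy => h y hy.1.le
  exact ⟨ξ, hξ, by simp [heq, fwdDiff]⟩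

theorem exists_fwdDiff_fwdDiff_eq (h : ∀ y ≥ x, HasDerivAt F (F' y) y)
    (h' : ∀ y ≥ x, HasDerivAt F' (F'' y) y) :
    ∃ ξ ∈ Set.Ioo x (x + 2), Δ_[1] (Δ_[1] F) x = F'' ξ := by
  obtain ⟨ζ, hζ, heq⟩ := exists_fwdDiff_eq (hasDerivAt_fwdDiff h)
  obtain ⟨ξ, hξ, heq'⟩ := exists_fwdDiff_eq fun y hy => h' y (hζ.1.le.trans hy)
  exact ⟨ξ, ⟨hζ.1.trans hξ.1, by linarith [hζ.2, hξ.2]⟩, heq.trans heq'⟩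

theorem exists_fwdDiff_eq_mul_fwdDiff {f φ g φ' : ℝ → ℝ}
    (hf : ∀ y ≥ x, HasDerivAt f (Real.exp (φ y)) y)
    (hg : ∀ y ≥ x, HasDerivAt g (Real.exp (φ y) * φ' y) y) :
    ∃ ξ ∈ Set.Ioo x (x + 1), Δ_[1] g x = φ' ξ * Δ_[1] f x := by
  obtain ⟨ξ, hξ, heq⟩ := exists_ratio_hasDerivAt_eq_ratio_slope f (fun y => Real.exp (φ y))
    (lt_add_one x) (fun y hy => (hf y hy.1).continuousAt.continuousWithinAt)
    (fun y hy => hf y hy.1.le) g (fun y => Real.exp (φ y) * φ' y)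
    (fun y hy => (hg y hy.1).continuousAt.continuousWithinAt) fun y hy => hg y hy.1.le
  refine ⟨ξ, hξ, mul_right_cancel₀ (Real.exp_ne_zero (φ ξ)) ?_⟩
  rw [fwdDiff, heq, fwdDiff]
  ring

theorem abs_fwdDiff_fwdDiff_sub_le {u v : ℕ → ℝ} {n : ℕ} {c : ℝ}
    (h : ∀ k ≥ n, |u k - v k| ≤ c) :
    |Δ_[1] (Δ_[1] u) n - Δ_[1] (Δ_[1] v) n| ≤ 4 * c := by
  have h₀ := abs_le.1 (h n le_rfl)
  have h₁ := abs_le.1 (h (n + 1) (by omega))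
  have h₂ := abs_le.1 (h (n + 1 + 1) (by omega))
  simp only [fwdDiff, abs_le]
  constructor <;> linarith

end ForwardDifferences

theorem inv_add_one_le_of_one_add_inv_le_exp {c u : ℝ} (hc : 0 < c) (h : 1 + c⁻¹ ≤ Real.exp u) :
    (c + 1)⁻¹ ≤ u :=
  calc (c + 1)⁻¹ = 1 - (1 + c⁻¹)⁻¹ := by field_simp; ring
    _ ≤ Real.log (1 + c⁻¹) := Real.one_sub_inv_le_log_of_pos (by positivity)
    _ ≤ u := (Real.log_le_iff_le_exp (by positivity)).2 h

/-- Beyond `M` the increments of `A` are positive, nondecreasing and strictly log-concave, and the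
second differences of their logarithms are at least `-η`. -/
structure SlowlyLogConcave (A : ℕ → ℝ) (M : ℕ) (η : ℝ) : Prop where
  increment_pos : ∀ n ≥ M, 0 < Δ_[1] A n
  increment_le_succ : ∀ n ≥ M, Δ_[1] A n ≤ Δ_[1] A (n + 1)
  log_neg : ∀ n ≥ M, Δ_[1] (Δ_[1] fun k => Real.log (Δ_[1] A k)) n < 0
  neg_le_log : ∀ n ≥ M, -η ≤ Δ_[1] (Δ_[1] fun k => Real.log (Δ_[1] A k)) n

namespace SlowlyLogConcave

variable {A : ℕ → ℝ} {M H : ℕ} {η : ℝ}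

theorem strictMonoOn (h : SlowlyLogConcave A M η) : StrictMonoOn A (Set.Ici M) := by
  intro m hm n _ hmn
  induction n, hmn using Nat.le_induction with
  | base => exact sub_pos.1 (h.increment_pos m hm)
  | succ k hk ih => exact (ih (by grind)).trans (sub_pos.1 (h.increment_pos k (by grind)))

theorem increment_mono (h : SlowlyLogConcave A M η) : MonotoneOn (Δ_[1] A) (Set.Ici M) := by
  intro m hm n _ hmn
  induction n, hmn using Nat.le_induction with
  | base => exact le_rfl
  | succ k hk ih => exact (ih (by grind)).trans (h.increment_le_succ k (by grind))

theorem increment_mul_lt (h : SlowlyLogConcave A M η) {i j s : ℕ} (hi : M ≤ i) (hij : i < j)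
    (hs : 0 < s) : Δ_[1] A (j + s) * Δ_[1] A i < Δ_[1] A j * Δ_[1] A (i + s) := by
  have pos (n : ℕ) (hn : i ≤ n) : 0 < Δ_[1] A n := h.increment_pos n (hi.trans hn)
  have sum_neg : ∑ u ∈ Finset.Ico i j, ∑ v ∈ Finset.Ico 0 s,
      Δ_[1] (Δ_[1] fun n => Real.log (Δ_[1] A n)) (v + u) < 0 :=
    Finset.sum_neg (fun u hu => Finset.sum_neg (fun v _ => h.log_neg _ (by grind))
      (Finset.nonempty_Ico.2 hs)) (Finset.nonempty_Ico.2 hij)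
  rw [sum_sum_fwdDiff_fwdDiff _ hij.le] at sum_neg
  have := pos i le_rfl
  have := pos (i + s) (by grind)
  have := pos j hij.le
  have := pos (j + s) (by grind)
  rw [← Real.log_lt_log_iff (by positivity) (by positivity),
    Real.log_mul (by positivity) (by positivity), Real.log_mul (by positivity) (by positivity)]
  linarith

theorem increment_mul_le (h : SlowlyLogConcave A M η) {i j : ℕ} (hi : M ≤ i) (hij : i ≤ j)
    (s : ℕ) : Δ_[1] A j * Δ_[1] A (i + s) ≤
      Real.exp (((j - i : ℕ) : ℝ) * s * η) * (Δ_[1] A (j + s) * Δ_[1] A i) := by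
  have pos (n : ℕ) (hn : i ≤ n) : 0 < Δ_[1] A n := h.increment_pos n (hi.trans hn)
  have le_sum : -(((j - i : ℕ) : ℝ) * s * η) ≤ ∑ u ∈ Finset.Ico i j, ∑ v ∈ Finset.Ico 0 s,
      Δ_[1] (Δ_[1] fun n => Real.log (Δ_[1] A n)) (v + u) := by
    calc -(((j - i : ℕ) : ℝ) * s * η) = ∑ _ ∈ Finset.Ico i j, ∑ _ ∈ Finset.Ico 0 s, -η := by
          simp [mul_assoc]
      _ ≤ _ := by
          gcongr with u hu v _
          exact h.neg_le_log _ (by grind)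
  rw [sum_sum_fwdDiff_fwdDiff _ hij] at le_sum
  have := pos i le_rfl
  have := pos (i + s) (by grind)
  have := pos j hij
  have := pos (j + s) (by grind)
  rw [← Real.log_le_log_iff (by positivity) (by positivity),
    Real.log_mul (Real.exp_ne_zero _) (by positivity), Real.log_exp,
    Real.log_mul (by positivity) (by positivity), Real.log_mul (by positivity) (by positivity)]
  linarith

theorem gap_mul_gap_lt (h : SlowlyLogConcave A M η) {p q r t s : ℕ} (hp : M ≤ p) (hpq : p < q)
    (hqr : q ≤ r) (hrt : r < t) (hs : 0 < s) :
    (A (t + s) - A (r + s)) * (A q - A p) < (A t - A r) * (A (q + s) - A (p + s)) := by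
  rw [← sum_Ico_fwdDiff A hrt.le, ← sum_Ico_fwdDiff A hpq.le, ← sum_Ico_fwdDiff_add A hrt.le,
    ← sum_Ico_fwdDiff_add A hpq.le, Finset.sum_mul_sum, Finset.sum_mul_sum]
  refine Finset.sum_lt_sum_of_nonempty (Finset.nonempty_Ico.2 hrt) fun u hu =>
    Finset.sum_lt_sum_of_nonempty (Finset.nonempty_Ico.2 hpq) fun v hv => ?_
  exact h.increment_mul_lt (by grind) (by grind) hs

theorem gap_mul_gap_le (h : SlowlyLogConcave A M η) (hη : 0 ≤ η) {p q r t s : ℕ} (hp : M ≤ p)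
    (hpq : p ≤ q) (hqr : q ≤ r) (hrt : r ≤ t) (htp : t ≤ p + H) (hsH : s ≤ H) :
    (A t - A r) * (A (q + s) - A (p + s)) ≤
      Real.exp ((H : ℝ) ^ 2 * η) * ((A (t + s) - A (r + s)) * (A q - A p)) := by
  rw [← sum_Ico_fwdDiff A hrt, ← sum_Ico_fwdDiff A hpq, ← sum_Ico_fwdDiff_add A hrt,
    ← sum_Ico_fwdDiff_add A hpq, Finset.sum_mul_sum, Finset.sum_mul_sum]
  simp_rw [Finset.mul_sum]
  refine Finset.sum_le_sum fun u hu => Finset.sum_le_sum fun v hv => ?_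
  have increments_nonneg : 0 ≤ Δ_[1] A (u + s) * Δ_[1] A v :=
    (mul_pos (h.increment_pos _ (by grind)) (h.increment_pos _ (by grind))).le
  have distance_le : u - v ≤ H := by grind
  calc Δ_[1] A u * Δ_[1] A (v + s)
      ≤ Real.exp (((u - v : ℕ) : ℝ) * s * η) * (Δ_[1] A (u + s) * Δ_[1] A v) :=
        h.increment_mul_le (by grind) (by grind) s
    _ ≤ Real.exp ((H : ℝ) ^ 2 * η) * (Δ_[1] A (u + s) * Δ_[1] A v) := by
        rw [pow_two]
        gcongr

theorem one_add_inv_mul_gap_le (h : SlowlyLogConcave A M η) {r t t' : ℕ} (hr : M ≤ r)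
    (hrt : r < t) (htt : t < t') : (1 + ((t - r : ℕ) : ℝ)⁻¹) * (A t - A r) ≤ A t' - A r := by
  have length_pos : 0 < ((t - r : ℕ) : ℝ) := by exact_mod_cast Nat.sub_pos_of_lt hrt
  have gap_le : A t - A r ≤ (t - r : ℕ) * (A (t + 1) - A t) := by
    calc A t - A r = ∑ u ∈ Finset.Ico r t, Δ_[1] A u := (sum_Ico_fwdDiff A hrt.le).symm
      _ ≤ ∑ _ ∈ Finset.Ico r t, Δ_[1] A t := by
          gcongr with u hu
          exact h.increment_mono (by grind) (by grind) (by grind)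
      _ = _ := by simp only [fwdDiff, Finset.sum_const, Nat.card_Ico, nsmul_eq_mul]
  have next_le : A (t + 1) ≤ A t' := h.strictMonoOn.monotoneOn (by grind) (by grind) htt
  have := (inv_mul_le_iff₀ length_pos).2 gap_le
  linarith

theorem add_ne_add_of_translate (h : SlowlyLogConcave A M η) (hη : 0 ≤ η)
    (hH : (H : ℝ) ^ 3 * η < 1) {p q r t s t' : ℕ} (hp : M ≤ p) (hpq : p < q) (hqr : q ≤ r)
    (hrt : r < t) (hs : 0 < s) (hsH : s ≤ H) (htp : t ≤ p + H) (hrt' : r + s < t')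
    (hA : A p + A t = A q + A r) : A (p + s) + A t' ≠ A (q + s) + A (r + s) := by
  intro hA'
  have gap_pos {i j : ℕ} (hi : M ≤ i) (hij : i < j) : 0 < A j - A i :=
    sub_pos.2 (h.strictMonoOn hi (hi.trans hij.le) hij)
  have old_gap_pos := gap_pos hp hpq
  have new_gap_pos := gap_pos (hp.trans (by omega)) (Nat.add_lt_add_right hrt s)
  have gap_eq : A t - A r = A q - A p := by linarith
  have gap_eq' : A t' - A (r + s) = A (q + s) - A (p + s) := by linarith
  have gap_lt : A (t + s) - A (r + s) < A t' - A (r + s) := by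
    have := h.gap_mul_gap_lt hp hpq hqr hrt hs
    rw [gap_eq, ← gap_eq', mul_comm] at this
    exact lt_of_mul_lt_mul_left this old_gap_pos.le
  have gap_le : A t' - A (r + s) ≤
      Real.exp ((H : ℝ) ^ 2 * η) * (A (t + s) - A (r + s)) := by
    have := h.gap_mul_gap_le hη hp hpq.le hqr hrt.le htp hsH
    rw [gap_eq, ← gap_eq', mul_comm, ← mul_assoc] at this
    exact le_of_mul_le_mul_right this old_gap_pos
  have t_lt : t + s < t' := by
    have : A (t + s) < A t' := by linarith
    exact (h.strictMonoOn.lt_iff_lt (by grind) (by grind)).1 this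
  have growth :=
    (h.one_add_inv_mul_gap_le (by omega) (Nat.add_lt_add_right hrt s) t_lt).trans gap_le
  have length_le : ((t + s - (r + s) : ℕ) : ℝ) + 1 ≤ H := by norm_cast; omega
  have inv_le : (H : ℝ)⁻¹ ≤ (H : ℝ) ^ 2 * η :=
    (inv_anti₀ (by positivity) length_le).trans (inv_add_one_le_of_one_add_inv_le_exp
      (Nat.cast_pos.2 (by omega)) (le_of_mul_le_mul_right growth new_gap_pos))
  rw [inv_le_iff_one_le_mul₀ (by norm_cast; omega)] at inv_le
  linarith

theorem nestedQuadruples_first_le (h : SlowlyLogConcave A M η) (hη : 0 ≤ η)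
    (hH : (H : ℝ) ^ 3 * η < 1) {p q r t p' q' r' t' : ℕ}
    (hx : ((p, t), (q, r)) ∈ nestedQuadruples (Finset.Ico M (M + H)) A)
    (hx' : ((p', t'), (q', r')) ∈ nestedQuadruples (Finset.Ico M (M + H)) A)
    (hq : q - p = q' - p') (hr : r - p = r' - p') : p' ≤ p := by
  by_contra! hpp
  simp only [mem_nestedQuadruples, Finset.mem_Ico] at hx hx'
  obtain ⟨⟨hblock, hA⟩, horder⟩ := hx
  obtain ⟨⟨hblock', hA'⟩, horder'⟩ := hx'
  obtain ⟨s, rfl⟩ := Nat.exists_eq_add_of_le hpp.le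
  obtain rfl : q' = q + s := by omega
  obtain rfl : r' = r + s := by omega
  rcases le_total q r with hqr | hrq
  · exact h.add_ne_add_of_translate hη hH (p := p) (q := q) (by omega) (by omega) hqr (by omega)
      (by omega : 0 < s) (by omega) (by omega) (by omega) hA hA'
  · exact h.add_ne_add_of_translate hη hH (p := p) (q := r) (by omega) (by omega) hrq (by omega)
      (by omega : 0 < s) (by omega) (by omega) (by omega) (hA.trans (add_comm _ _))
      (hA'.trans (add_comm _ _))

theorem card_nestedQuadruples_le (h : SlowlyLogConcave A M η) (hη : 0 ≤ η)
    (hH : (H : ℝ) ^ 3 * η < 1) :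
    (nestedQuadruples (Finset.Ico M (M + H)) A).card ≤ H ^ 2 := by
  have maps_to : ∀ x ∈ nestedQuadruples (Finset.Ico M (M + H)) A,
      (x.2.1 - x.1.1, x.2.2 - x.1.1) ∈ Finset.range H ×ˢ Finset.range H := by
    rintro ⟨⟨p, t⟩, ⟨q, r⟩⟩ hx
    simp only [mem_nestedQuadruples, Finset.mem_Ico] at hx
    simp only [Finset.mem_product, Finset.mem_range]
    omega
  refine (Finset.card_le_card_of_injOn _ maps_to ?_).trans (by simp [pow_two])
  rintro ⟨⟨p, t⟩, ⟨q, r⟩⟩ hx ⟨⟨p', t'⟩, ⟨q', r'⟩⟩ hx' hdist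
  obtain ⟨hq, hr⟩ : q - p = q' - p' ∧ r - p = r' - p' := Prod.mk.inj hdist
  obtain rfl : p = p' := le_antisymm
    (h.nestedQuadruples_first_le hη hH hx' hx hq.symm hr.symm)
    (h.nestedQuadruples_first_le hη hH hx hx' hq hr)
  simp only [Finset.mem_coe, mem_nestedQuadruples, Finset.mem_Ico] at hx hx'
  obtain rfl : q = q' := by omega
  obtain rfl : r = r' := by omega
  obtain rfl : t = t' := h.strictMonoOn.injOn (by grind) (by grind) (by linarith)
  rfl

theorem card_additiveQuadruples_le (h : SlowlyLogConcave A M η) (hη : 0 ≤ η)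
    (hH : (H : ℝ) ^ 3 * η < 1) :
    (additiveQuadruples (Finset.Ico M (M + H)) A).card ≤ 6 * H ^ 2 := by
  have strictMonoOn_block : StrictMonoOn A (Finset.Ico M (M + H)) :=
    h.strictMonoOn.mono fun n hn => (Finset.mem_Ico.1 hn).1
  have card_le := card_additiveQuadruples_le_of_strictMonoOn strictMonoOn_block
  rw [Nat.card_Ico, Nat.add_sub_cancel_left] at card_le
  linarith [h.card_nestedQuadruples_le hη hH]

end SlowlyLogConcave

theorem abs_log_sub_log_le {m a b : ℝ} (hm : 0 < m) (ha : m ≤ a) (hb : m ≤ b) :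
    |Real.log a - Real.log b| ≤ |a - b| / m := by
  wlog hab : b ≤ a generalizing a b
  · rw [abs_sub_comm, abs_sub_comm a]
    exact this hb ha (le_of_not_ge hab)
  have hb_pos : 0 < b := hm.trans_le hb
  have ha_pos : 0 < a := hm.trans_le ha
  rw [abs_of_nonneg (sub_nonneg.2 (Real.log_le_log hb_pos hab)), abs_of_nonneg (sub_nonneg.2 hab),
    ← Real.log_div ha_pos.ne' hb_pos.ne']
  calc Real.log (a / b) ≤ a / b - 1 := Real.log_le_sub_one_of_pos (div_pos ha_pos hb_pos)
    _ = (a - b) / b := by rw [sub_div, div_self hb_pos.ne']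
    _ ≤ (a - b) / m := by gcongr

/-- `f` has derivative `exp φ`, where `φ` grows at least like `3 log x` and has derivatives `φ₁` and
`φ₂` whose orders of magnitude are `x⁻¹` and `-x⁻²`, up to a factor `x ^ (1 - δ)` respectively
`x ^ δ`. -/
structure LogConcaveGrowth (f φ φ₁ φ₂ : ℝ → ℝ) (δ X : ℝ) : Prop where
  mem_Icc : δ ∈ Set.Icc (0 : ℝ) 2
  ten_le : 10 ≤ X
  hasDerivAt : ∀ x ≥ X, HasDerivAt f (Real.exp (φ x)) x
  hasDerivAt_log : ∀ x ≥ X, HasDerivAt φ (φ₁ x) x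
  hasDerivAt_log' : ∀ x ≥ X, HasDerivAt φ₁ (φ₂ x) x
  pow_three_le : ∀ x ≥ X, x ^ 3 ≤ Real.exp (φ x)
  inv_le : ∀ x ≥ X, x⁻¹ ≤ φ₁ x
  le_rpow : ∀ x ≥ X, φ₁ x ≤ x ^ (-δ) / 2
  neg_rpow_le : ∀ x ≥ X, -x ^ (δ - 2) ≤ φ₂ x
  le_neg : ∀ x ≥ X, φ₂ x ≤ -(8 / x ^ 2)

namespace LogConcaveGrowth

variable {f φ φ₁ φ₂ : ℝ → ℝ} {δ X x : ℝ}

theorem hasDerivAt_exp (h : LogConcaveGrowth f φ φ₁ φ₂ δ X) :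
    ∀ x ≥ X, HasDerivAt (fun y => Real.exp (φ y)) (Real.exp (φ x) * φ₁ x) x := fun x hx =>
  (h.hasDerivAt_log x hx).exp

theorem hasDerivAt_exp_mul (h : LogConcaveGrowth f φ φ₁ φ₂ δ X) :
    ∀ x ≥ X, HasDerivAt (fun y => Real.exp (φ y) * φ₁ y)
      (Real.exp (φ x) * (φ₂ x + φ₁ x ^ 2)) x := fun x hx =>
  ((h.hasDerivAt_exp x hx).mul (h.hasDerivAt_log' x hx)).congr_deriv (by ring)

theorem pow_three_le_fwdDiff (h : LogConcaveGrowth f φ φ₁ φ₂ δ X) (hx : X ≤ x) :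
    x ^ 3 ≤ Δ_[1] f x := by
  obtain ⟨ξ, hξ, heq⟩ := exists_fwdDiff_eq fun y hy => h.hasDerivAt y (hx.trans hy)
  have x_pos : 0 < x := by linarith [h.ten_le]
  rw [heq]
  exact (pow_le_pow_left₀ x_pos.le hξ.1.le 3).trans (h.pow_three_le ξ (hx.trans hξ.1.le))

theorem pow_two_le_fwdDiff_fwdDiff (h : LogConcaveGrowth f φ φ₁ φ₂ δ X) (hx : X ≤ x) :
    x ^ 2 ≤ Δ_[1] (Δ_[1] f) x := by
  obtain ⟨ξ, hξ, heq⟩ := exists_fwdDiff_fwdDiff_eq (fun y hy => h.hasDerivAt y (hx.trans hy))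
    fun y hy => h.hasDerivAt_exp y (hx.trans hy)
  have x_pos : 0 < x := by linarith [h.ten_le]
  have ξ_pos : 0 < ξ := x_pos.trans hξ.1
  have X_le : X ≤ ξ := hx.trans hξ.1.le
  calc x ^ 2 ≤ ξ ^ 2 := pow_le_pow_left₀ x_pos.le hξ.1.le 2
    _ = ξ ^ 3 * ξ⁻¹ := by field_simp
    _ ≤ Real.exp (φ ξ) * φ₁ ξ := by
        gcongr
        exacts [h.pow_three_le ξ X_le, h.inv_le ξ X_le]
    _ = _ := heq.symm

theorem fwdDiff_pos (h : LogConcaveGrowth f φ φ₁ φ₂ δ X) (hx : X ≤ x) : 0 < Δ_[1] f x :=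
  lt_of_lt_of_le (pow_pos (by linarith [h.ten_le]) 3) (h.pow_three_le_fwdDiff hx)

theorem exists_fwdDiff_fwdDiff_log_eq (h : LogConcaveGrowth f φ φ₁ φ₂ δ X) (hx : X ≤ x) :
    ∃ ζ ∈ Set.Ioo x (x + 3), ∃ ξ ∈ Set.Ioo x (x + 3), |ζ - ξ| ≤ 1 ∧
      Δ_[1] (Δ_[1] fun y => Real.log (Δ_[1] f y)) x = φ₂ ζ + (φ₁ ζ ^ 2 - φ₁ ξ ^ 2) := by
  let E : ℝ → ℝ := fun y => Real.exp (φ y)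
  have ne_zero (y : ℝ) (hy : y ≥ X) : Δ_[1] f y ≠ 0 := (h.fwdDiff_pos hy).ne'
  have hasDerivAt_log_fwdDiff : ∀ y ≥ X,
      HasDerivAt (fun y => Real.log (Δ_[1] f y)) (Δ_[1] E y / Δ_[1] f y) y := fun y hy =>
    (hasDerivAt_fwdDiff h.hasDerivAt y hy).log (ne_zero y hy)
  have hasDerivAt_div : ∀ y ≥ X, HasDerivAt (fun y => Δ_[1] E y / Δ_[1] f y)
      ((Δ_[1] (fun y => E y * φ₁ y) y * Δ_[1] f y - Δ_[1] E y * Δ_[1] E y) / Δ_[1] f y ^ 2) y :=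
    fun y hy => (hasDerivAt_fwdDiff h.hasDerivAt_exp y hy).div
      (hasDerivAt_fwdDiff h.hasDerivAt y hy) (ne_zero y hy)
  obtain ⟨y, hy, heq⟩ := exists_fwdDiff_fwdDiff_eq
    (fun y hy => hasDerivAt_log_fwdDiff y (hx.trans hy)) fun y hy => hasDerivAt_div y (hx.trans hy)
  have X_le : X ≤ y := hx.trans hy.1.le
  obtain ⟨ζ, hζ, heq_ζ⟩ := exists_fwdDiff_eq_mul_fwdDiff
    (fun z hz => h.hasDerivAt z (X_le.trans hz)) fun z hz => h.hasDerivAt_exp_mul z (X_le.trans hz)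
  obtain ⟨ξ, hξ, heq_ξ⟩ := exists_fwdDiff_eq_mul_fwdDiff
    (fun z hz => h.hasDerivAt z (X_le.trans hz)) fun z hz => h.hasDerivAt_exp z (X_le.trans hz)
  refine ⟨ζ, by grind, ξ, by grind, by grind, ?_⟩
  rw [heq, heq_ζ, heq_ξ, div_eq_iff (pow_ne_zero 2 (ne_zero y X_le))]
  ring

theorem abs_sq_sub_sq_le (h : LogConcaveGrowth f φ φ₁ φ₂ δ X) (hx : X ≤ x) {ζ ξ : ℝ} (hζ : x ≤ ζ)
    (hξ : x ≤ ξ) (hζξ : |ζ - ξ| ≤ 1) : |φ₁ ζ ^ 2 - φ₁ ξ ^ 2| ≤ (x ^ 2)⁻¹ := by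
  have x_pos : 0 < x := by linarith [h.ten_le]
  have φ₁_mem (y : ℝ) (hy : x ≤ y) : φ₁ y ∈ Set.Icc 0 (x ^ (-δ) / 2) := by
    have y_pos : 0 < y := x_pos.trans_le hy
    refine ⟨(inv_pos.2 y_pos).le.trans (h.inv_le y (hx.trans hy)),
      (h.le_rpow y (hx.trans hy)).trans ?_⟩
    linarith [Real.rpow_le_rpow_of_nonpos x_pos hy (neg_nonpos.2 h.mem_Icc.1)]
  have φ₂_bound (y : ℝ) (hy : y ∈ Set.Ici x) : ‖φ₂ y‖ ≤ x ^ (δ - 2) := by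
    have X_le : X ≤ y := hx.trans hy
    have : φ₂ y ≤ 0 := (h.le_neg y X_le).trans (neg_nonpos.2 (by positivity))
    rw [Real.norm_of_nonpos this]
    linarith [h.neg_rpow_le y X_le,
      Real.rpow_le_rpow_of_nonpos x_pos hy (sub_nonpos.2 h.mem_Icc.2)]
  have lipschitz : |φ₁ ζ - φ₁ ξ| ≤ x ^ (δ - 2) * |ζ - ξ| :=
    (convex_Ici x).norm_image_sub_le_of_norm_hasDerivWithin_le
      (fun y hy => (h.hasDerivAt_log' y (hx.trans hy)).hasDerivWithinAt) φ₂_bound hξ hζ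
  have sum_le : |φ₁ ζ + φ₁ ξ| ≤ x ^ (-δ) := by
    have := φ₁_mem ζ hζ
    have := φ₁_mem ξ hξ
    rw [abs_le]
    grind
  calc |φ₁ ζ ^ 2 - φ₁ ξ ^ 2| = |φ₁ ζ + φ₁ ξ| * |φ₁ ζ - φ₁ ξ| := by rw [sq_sub_sq, abs_mul]
    _ ≤ x ^ (-δ) * (x ^ (δ - 2) * 1) := by grw [sum_le, lipschitz, hζξ]
    _ = (x ^ 2)⁻¹ := by
        rw [mul_one, ← Real.rpow_add x_pos, neg_add_eq_sub, sub_sub_cancel_left,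
          Real.rpow_neg x_pos.le, Real.rpow_two]

theorem fwdDiff_fwdDiff_log_mem_Icc (h : LogConcaveGrowth f φ φ₁ φ₂ δ X) (hx : X ≤ x) :
    Δ_[1] (Δ_[1] fun y => Real.log (Δ_[1] f y)) x ∈
      Set.Icc (-x ^ (δ - 2) - (x ^ 2)⁻¹) (-3 * (x ^ 2)⁻¹) := by
  obtain ⟨ζ, hζ, ξ, hξ, hζξ, heq⟩ := h.exists_fwdDiff_fwdDiff_log_eq hx
  have ten_le : 10 ≤ x := h.ten_le.trans hx
  have X_le : X ≤ ζ := hx.trans hζ.1.le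
  have square_error := abs_le.1 (h.abs_sq_sub_sq_le hx hζ.1.le hξ.1.le hζξ)
  have le_φ₂ : -x ^ (δ - 2) ≤ φ₂ ζ := (neg_le_neg (Real.rpow_le_rpow_of_nonpos (by linarith)
    hζ.1.le (sub_nonpos.2 h.mem_Icc.2))).trans (h.neg_rpow_le ζ X_le)
  have φ₂_le : φ₂ ζ ≤ -4 * (x ^ 2)⁻¹ := by
    have sq_le : ζ ^ 2 ≤ 2 * x ^ 2 := by nlinarith [hζ.1, hζ.2]
    have : 4 * (x ^ 2)⁻¹ ≤ 8 / ζ ^ 2 := by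
      have : 0 < ζ := by linarith [hζ.1]
      rw [← div_eq_mul_inv, div_le_div_iff₀ (by positivity) (by positivity)]
      linarith
    linarith [h.le_neg ζ X_le]
  rw [heq]
  constructor <;> linarith

theorem abs_log_fwdDiff_floor_sub_le (h : LogConcaveGrowth f φ φ₁ φ₂ δ X) {k : ℕ} (hk : X ≤ k) :
    |Real.log (Δ_[1] (fun n : ℕ => (⌊f n⌋ : ℝ)) k) - Real.log (Δ_[1] f (k : ℝ))| ≤
      2 / (k : ℝ) ^ 3 := by
  have ten_le : 10 ≤ (k : ℝ) := h.ten_le.trans hk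
  have cube_le := h.pow_three_le_fwdDiff hk
  have half_cube : 1 ≤ (k : ℝ) ^ 3 / 2 := by nlinarith [pow_le_pow_left₀ (by norm_num) ten_le 3]
  have rounding : |Δ_[1] (fun n : ℕ => (⌊f n⌋ : ℝ)) k - Δ_[1] f (k : ℝ)| ≤ 1 := by
    rw [← fwdDiff_natCast]
    simp only [fwdDiff, abs_le]
    constructor <;> linarith [Int.floor_le (f k), Int.lt_floor_add_one (f k),
      Int.floor_le (f (k + 1 : ℕ)), Int.lt_floor_add_one (f (k + 1 : ℕ))]
  calc _ ≤ |Δ_[1] (fun n : ℕ => (⌊f n⌋ : ℝ)) k - Δ_[1] f (k : ℝ)| / ((k : ℝ) ^ 3 / 2) :=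
        abs_log_sub_log_le (by linarith) (by linarith [abs_le.1 rounding]) (by linarith)
    _ ≤ 1 / ((k : ℝ) ^ 3 / 2) := by gcongr
    _ = 2 / (k : ℝ) ^ 3 := by ring

theorem fwdDiff_fwdDiff_log_floor_mem_Ico (h : LogConcaveGrowth f φ φ₁ φ₂ δ X) {n : ℕ}
    (hn : X ≤ n) : Δ_[1] (Δ_[1] fun k : ℕ => Real.log (Δ_[1] (fun n : ℕ => (⌊f n⌋ : ℝ)) k)) n ∈
      Set.Ico (-(3 * (n : ℝ) ^ (δ - 2))) 0 := by
  have ten_le : 10 ≤ (n : ℝ) := h.ten_le.trans hn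
  have rounding := abs_le.1 <| abs_fwdDiff_fwdDiff_sub_le (n := n) (c := 2 / (n : ℝ) ^ 3)
    (u := fun k => Real.log (Δ_[1] (fun n : ℕ => (⌊f n⌋ : ℝ)) k))
    (v := fun k => Real.log (Δ_[1] f (k : ℝ))) fun k hk => by
      have n_le : (n : ℝ) ≤ k := Nat.cast_le.2 hk
      grw [h.abs_log_fwdDiff_floor_sub_le (hn.trans n_le), n_le]
  have smooth := h.fwdDiff_fwdDiff_log_mem_Icc hn
  have inv_pos : 0 < ((n : ℝ) ^ 2)⁻¹ := by positivity
  have error_le : 4 * (2 / (n : ℝ) ^ 3) ≤ ((n : ℝ) ^ 2)⁻¹ := by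
    rw [inv_eq_one_div, ← mul_div_assoc, div_le_div_iff₀ (by positivity) (by positivity)]
    nlinarith [sq_nonneg (n : ℝ)]
  have inv_le : ((n : ℝ) ^ 2)⁻¹ ≤ (n : ℝ) ^ (δ - 2) := by
    rw [← Real.rpow_natCast, ← Real.rpow_neg (by positivity)]
    exact Real.rpow_le_rpow_of_exponent_le (by linarith) (by push_cast; linarith [h.mem_Icc.1])
  have cast_eq : Δ_[1] (Δ_[1] fun k : ℕ => Real.log (Δ_[1] f (k : ℝ))) n =
      Δ_[1] (Δ_[1] fun y => Real.log (Δ_[1] f y)) (n : ℝ) := by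
    rw [← fwdDiff_natCast]
    congr! 1
    exact funext fun k => fwdDiff_natCast (fun y => Real.log (Δ_[1] f y)) k
  rw [cast_eq] at rounding
  rw [Set.mem_Icc] at smooth
  constructor <;> linarith

theorem slowlyLogConcave_floor (h : LogConcaveGrowth f φ φ₁ φ₂ δ X) {M : ℕ} (hM : X ≤ M) :
    SlowlyLogConcave (fun n => (⌊f n⌋ : ℝ)) M (3 * (M : ℝ) ^ (δ - 2)) := by
  have X_le {n : ℕ} (hn : n ≥ M) : X ≤ n := hM.trans (Nat.cast_le.2 hn)
  have floor_mem (n : ℕ) : (⌊f n⌋ : ℝ) ∈ Set.Ioc (f n - 1) (f n) :=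
    ⟨Int.sub_one_lt_floor _, Int.floor_le _⟩
  refine ⟨fun n hn => ?_, fun n hn => ?_, fun n hn => ?_, fun n hn => ?_⟩
  · have increment_ge := h.pow_three_le_fwdDiff (X_le hn)
    have : 1 ≤ (n : ℝ) ^ 3 := one_le_pow₀ (by linarith [h.ten_le, X_le hn])
    rw [← fwdDiff_natCast] at increment_ge
    simp only [fwdDiff] at increment_ge ⊢
    linarith [(floor_mem (n + 1)).1, (floor_mem n).2]
  · have second_ge := h.pow_two_le_fwdDiff_fwdDiff (X_le hn)
    have : 2 ≤ (n : ℝ) ^ 2 := by nlinarith [h.ten_le, X_le hn]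
    simp only [fwdDiff, ← Nat.cast_add_one] at second_ge ⊢
    linarith [(floor_mem (n + 1 + 1)).1, (floor_mem (n + 1)).2, (floor_mem n).1]
  · exact (h.fwdDiff_fwdDiff_log_floor_mem_Ico (X_le hn)).2
  · refine le_trans (neg_le_neg ?_) (h.fwdDiff_fwdDiff_log_floor_mem_Ico (X_le hn)).1
    have M_pos : 0 < (M : ℝ) := by linarith [h.ten_le]
    gcongr 3 * ?_
    exact Real.rpow_le_rpow_of_nonpos M_pos (Nat.cast_le.2 hn) (sub_nonpos.2 h.mem_Icc.2)

end LogConcaveGrowth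

section ExpRpowLog

open scoped Asymptotics

namespace LogConcaveGrowth

theorem exists_of_comp_log {f Φ P P' : ℝ → ℝ} {δ : ℝ} (hδ : δ ∈ Set.Icc (0 : ℝ) 2)
    (hf : ∀ᶠ x in atTop, HasDerivAt f (Real.exp (Φ (Real.log x))) x)
    (hΦ : ∀ᶠ l in atTop, HasDerivAt Φ (P l) l) (hP : ∀ᶠ l in atTop, HasDerivAt P (P' l) l)
    (hΦ_ge : ∀ᶠ l in atTop, 3 * l ≤ Φ l) (hP_top : Tendsto P atTop atTop)
    (hP_lo : P =o[atTop] fun l => Real.exp ((1 - δ) * l))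
    (hQ_top : Tendsto (fun l => P l - P' l) atTop atTop)
    (hQ_lo : (fun l => P l - P' l) =o[atTop] fun l => Real.exp (δ * l)) :
    ∃ X, LogConcaveGrowth f (fun x => Φ (Real.log x)) (fun x => P (Real.log x) / x)
      (fun x => (P' (Real.log x) - P (Real.log x)) / x ^ 2) δ X := by
  have eventually_log {p : ℝ → Prop} (hp : ∀ᶠ l in atTop, p l) : ∀ᶠ x in atTop, p (Real.log x) :=
    Real.tendsto_log_atTop.eventually hp
  obtain ⟨X, hX⟩ := eventually_atTop.1 <| hf.and <| (eventually_log hΦ).and <|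
    (eventually_log hP).and <| (eventually_log hΦ_ge).and <|
    (eventually_log (hP_top.eventually_ge_atTop 1)).and <|
    (eventually_log (hP_lo.bound (by norm_num : (0 : ℝ) < 1 / 2))).and <|
    (eventually_log (hQ_top.eventually_ge_atTop 8)).and <| eventually_log (hQ_lo.bound one_pos)
  refine ⟨max X 10, ?_⟩
  have pos {x : ℝ} (hx : x ≥ max X 10) : 0 < x := by linarith [le_of_max_le_right hx]
  have exp_mul_log {x : ℝ} (hx : 0 < x) (c : ℝ) : ‖Real.exp (c * Real.log x)‖ = x ^ c := by
    rw [Real.norm_of_nonneg (Real.exp_pos _).le, Real.rpow_def_of_pos hx, mul_comm]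
  refine ⟨hδ, le_max_right X 10, fun x hx => ?_, fun x hx => ?_, fun x hx => ?_, fun x hx => ?_,
    fun x hx => ?_, fun x hx => ?_, fun x hx => ?_, fun x hx => ?_⟩ <;>
  obtain ⟨hf, hΦ, hP, hΦ_ge, hP_ge, hP_le, hQ_ge, hQ_le⟩ := hX x (le_of_max_le_left hx) <;>
  have x_pos := pos hx <;>
  rw [exp_mul_log x_pos] at hP_le hQ_le
  · exact hf
  · exact (hΦ.comp x (Real.hasDerivAt_log x_pos.ne')).congr_deriv (div_eq_mul_inv _ _).symm
  · refine ((hP.comp x (Real.hasDerivAt_log x_pos.ne')).div (hasDerivAt_id x)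
      x_pos.ne').congr_deriv ?_
    simp [x_pos.ne']
  · rw [← Real.rpow_natCast, Real.rpow_def_of_pos x_pos, Real.exp_le_exp]
    push_cast
    linarith
  · rw [inv_eq_one_div]
    gcongr
  · calc P (Real.log x) / x ≤ 1 / 2 * x ^ (1 - δ) / x := by grw [← hP_le, ← Real.le_norm_self]
      _ = x ^ (-δ) / 2 := by
        rw [sub_eq_neg_add, Real.rpow_add_one x_pos.ne']
        field_simp
  · rw [Real.rpow_sub x_pos, Real.rpow_two, ← neg_div]
    gcongr
    linarith [(Real.le_norm_self _).trans hQ_le]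
  · rw [← neg_div]
    gcongr
    linarith

end LogConcaveGrowth

variable {s : ℝ} {g v : ℝ → ℝ} {g₀ v₀ : ℝ}

theorem tendsto_rpow_mul_add (hs : 0 < s) (hg₀ : 0 < g₀) (hg : Tendsto g atTop (nhds g₀))
    (hv : Tendsto v atTop (nhds v₀)) : Tendsto (fun l : ℝ => l ^ s * g l + v l) atTop atTop :=
  ((tendsto_rpow_atTop hs).atTop_mul_pos hg₀ hg).atTop_add hv

theorem rpow_mul_add_isLittleO_exp {c : ℝ} (hc : 0 < c) (hg : Tendsto g atTop (nhds g₀))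
    (hv : Tendsto v atTop (nhds v₀)) :
    (fun l : ℝ => l ^ s * g l + v l) =o[atTop] fun l => Real.exp (c * l) := by
  have exp_top : Tendsto (fun l : ℝ => Real.exp (c * l)) atTop atTop :=
    Real.tendsto_exp_atTop.comp (tendsto_id.const_mul_atTop hc)
  have one_isLittleO : (fun _ : ℝ => (1 : ℝ)) =o[atTop] fun l => Real.exp (c * l) :=
    Asymptotics.isLittleO_const_left.2 (.inr (tendsto_norm_atTop_atTop.comp exp_top))
  refine .add ?_ ((hv.isBigO_one ℝ).trans_isLittleO one_isLittleO)
  simpa using (isLittleO_rpow_exp_pos_mul_atTop s hc).mul_isBigO (hg.isBigO_one ℝ)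

section

variable (γ β : ℝ)

/-- With `l = log x`, the logarithm of the derivative of `exp (γ (log x) ^ β)`. -/
noncomputable def logDerivExpRpowLog (l : ℝ) : ℝ :=
  γ * l ^ β + Real.log (γ * β) + (β - 1) * Real.log l - l

variable {γ β}

theorem hasDerivAt_exp_rpow_log (hγ : 0 < γ) (hβ : 0 < β) {x : ℝ} (hx : 1 < x) :
    HasDerivAt (fun x => Real.exp (γ * Real.log x ^ β))
      (Real.exp (logDerivExpRpowLog γ β (Real.log x))) x := by
  have x_pos : 0 < x := by linarith
  have log_pos : 0 < Real.log x := Real.log_pos hx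
  refine ((((Real.hasDerivAt_log x_pos.ne').rpow_const (p := β) (Or.inl log_pos.ne')).const_mul
    γ).exp).congr_deriv ?_
  rw [logDerivExpRpowLog, Real.exp_sub, Real.exp_add, Real.exp_add, Real.exp_log (by positivity),
    Real.exp_log x_pos, mul_comm (β - 1), ← Real.rpow_def_of_pos log_pos]
  field_simp

theorem eventually_three_mul_le_logDerivExpRpowLog (hγ : 0 < γ) (hβ : 1 < β) :
    ∀ᶠ l in atTop, 3 * l ≤ logDerivExpRpowLog γ β l := by
  have main_top : Tendsto (fun l : ℝ => l * (l ^ (β - 1) * γ + -4)) atTop atTop :=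
    tendsto_id.atTop_mul_atTop₀
      (tendsto_rpow_mul_add (sub_pos.2 hβ) hγ tendsto_const_nhds tendsto_const_nhds)
  have log_top : Tendsto (fun l : ℝ => (β - 1) * Real.log l) atTop atTop :=
    Real.tendsto_log_atTop.const_mul_atTop (sub_pos.2 hβ)
  filter_upwards [(main_top.atTop_add_atTop log_top).eventually_ge_atTop (-Real.log (γ * β)),
    eventually_gt_atTop 0] with l hl l_pos
  have rpow_eq : l * l ^ (β - 1) = l ^ β := by
    rw [mul_comm, ← Real.rpow_add_one l_pos.ne', sub_add_cancel]
  rw [logDerivExpRpowLog, ← rpow_eq]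
  linarith

theorem hasDerivAt_logDerivExpRpowLog {l : ℝ} (hl : 0 < l) :
    HasDerivAt (logDerivExpRpowLog γ β) (l ^ (β - 1) * (γ * β) + ((β - 1) / l - 1)) l := by
  refine (((((Real.hasDerivAt_rpow_const (Or.inl hl.ne')).const_mul γ).add_const _).add
    ((Real.hasDerivAt_log hl.ne').const_mul (β - 1))).sub (hasDerivAt_id l)).congr_deriv ?_
  ring

theorem hasDerivAt_deriv_logDerivExpRpowLog {l : ℝ} (hl : 0 < l) :
    HasDerivAt (fun l => l ^ (β - 1) * (γ * β) + ((β - 1) / l - 1))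
      ((β - 1) * l ^ (β - 1 - 1) * (γ * β) + -(β - 1) / l ^ 2) l := by
  refine (((Real.hasDerivAt_rpow_const (Or.inl hl.ne')).mul_const (γ * β)).add
    (((hasDerivAt_const l (β - 1)).div (hasDerivAt_id l) hl.ne').sub_const 1)).congr_deriv ?_
  simp

theorem LogConcaveGrowth.exists_exp_rpow_log {δ : ℝ} (hγ : 0 < γ) (hβ : 1 < β)
    (hδ : δ ∈ Set.Ioo (0 : ℝ) 1) : ∃ φ φ₁ φ₂ X,
      LogConcaveGrowth (fun x => Real.exp (γ * Real.log x ^ β)) φ φ₁ φ₂ δ X := by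
  have β_pos : 0 < β := by linarith
  have const_pos : 0 < γ * β := by positivity
  have inv_tendsto : Tendsto (fun l : ℝ => (β - 1) / l) atTop (nhds 0) :=
    tendsto_const_nhds.div_atTop tendsto_id
  have v_tendsto : Tendsto (fun l : ℝ => (β - 1) / l - 1) atTop (nhds (0 - 1)) :=
    inv_tendsto.sub_const 1
  have w_tendsto : Tendsto (fun l : ℝ => (β - 1) / l - 1 + (β - 1) / l ^ 2) atTop
      (nhds (0 - 1 + 0)) :=
    v_tendsto.add (tendsto_const_nhds.div_atTop (tendsto_pow_atTop two_ne_zero))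
  have g_tendsto : Tendsto (fun l : ℝ => γ * β * (1 - (β - 1) / l)) atTop
      (nhds (γ * β * (1 - 0))) :=
    (inv_tendsto.const_sub 1).const_mul _
  have difference_eq : (fun l : ℝ => l ^ (β - 1) * (γ * β * (1 - (β - 1) / l)) +
      ((β - 1) / l - 1 + (β - 1) / l ^ 2)) =ᶠ[atTop]
      fun l => l ^ (β - 1) * (γ * β) + ((β - 1) / l - 1) -
        ((β - 1) * l ^ (β - 1 - 1) * (γ * β) + -(β - 1) / l ^ 2) := by
    filter_upwards [eventually_gt_atTop 0] with l hl
    rw [Real.rpow_sub_one hl.ne' (β - 1)]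
    ring
  refine ⟨_, _, _, LogConcaveGrowth.exists_of_comp_log ⟨hδ.1.le, by linarith [hδ.2]⟩
    ((eventually_gt_atTop 1).mono fun x hx => hasDerivAt_exp_rpow_log hγ β_pos hx)
    ((eventually_gt_atTop 0).mono fun l hl => hasDerivAt_logDerivExpRpowLog hl)
    ((eventually_gt_atTop 0).mono fun l hl => hasDerivAt_deriv_logDerivExpRpowLog hl)
    (eventually_three_mul_le_logDerivExpRpowLog hγ hβ)
    (tendsto_rpow_mul_add (sub_pos.2 hβ) const_pos tendsto_const_nhds v_tendsto)
    (rpow_mul_add_isLittleO_exp (by linarith [hδ.2]) tendsto_const_nhds v_tendsto)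
    ((tendsto_rpow_mul_add (sub_pos.2 hβ) (by simpa) g_tendsto w_tendsto).congr' difference_eq)
    ((rpow_mul_add_isLittleO_exp hδ.1 g_tendsto w_tendsto).congr' difference_eq .rfl)⟩

end

end ExpRpowLog

section BlockSums

theorem SlowlyLogConcave.le_measureReal_block {a : ℕ → ℤ} {M H : ℕ} {η : ℝ}
    (h : SlowlyLogConcave (fun n => (a n : ℝ)) M η) (hη : 0 ≤ η) (hH₀ : 0 < H)
    (hH : (H : ℝ) ^ 3 * η < 1) :
    1 / 24 ≤ (volume : Measure UnitAddCircle).real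
      {x | (H : ℝ) / 2 ≤ ‖∑ n ∈ Finset.Ico M (M + H), (fourier (a n) x : ℂ)‖ ^ 2} := by
  have block_continuous : Continuous fun x : UnitAddCircle =>
      ‖∑ n ∈ Finset.Ico M (M + H), (fourier (a n) x : ℂ)‖ ^ 2 := by fun_prop
  have injOn : Set.InjOn a (Finset.Ico M (M + H)) := fun m hm n hn hmn =>
    h.strictMonoOn.injOn (Finset.mem_Ico.1 hm).1 (Finset.mem_Ico.1 hn).1 (congrArg _ hmn)
  have mean_eq : ∫ x : UnitAddCircle, ‖∑ n ∈ Finset.Ico M (M + H), (fourier (a n) x : ℂ)‖ ^ 2 =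
      H := by
    rw [integral_norm_sq_sum_fourier_of_injOn injOn, Nat.card_Ico, Nat.add_sub_cancel_left]
  have quadruples_cast : additiveQuadruples (Finset.Ico M (M + H)) (fun n => (a n : ℝ)) =
      additiveQuadruples (Finset.Ico M (M + H)) a := by
    ext
    simp only [additiveQuadruples, Finset.mem_filter, ← Int.cast_add, Int.cast_inj]
  have second_moment_le : ∫ x : UnitAddCircle,
      (‖∑ n ∈ Finset.Ico M (M + H), (fourier (a n) x : ℂ)‖ ^ 2) ^ 2 ≤ 6 * (H : ℝ) ^ 2 := by
    rw [integral_norm_sq_sq_sum_fourier, ← quadruples_cast]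
    exact_mod_cast h.card_additiveQuadruples_le hη hH
  have : IsProbabilityMeasure (volume : Measure UnitAddCircle) := ⟨UnitAddCircle.measure_univ⟩
  have pz := paley_zygmund (μ := (volume : Measure UnitAddCircle)) (θ := 1 / 2)
    (block_continuous.memLp_of_hasCompactSupport (.of_compactSpace _))
    (mean_eq ▸ H.cast_nonneg) (by norm_num)
  rw [mean_eq, one_div_mul_eq_div] at pz
  grw [second_moment_le] at pz
  have H_sq_pos : 0 < (H : ℝ) ^ 2 := by positivity
  refine le_of_mul_le_mul_left ?_ H_sq_pos
  linarith

theorem eventually_ceil_rpow_pow_three_mul_lt_one {σ δ : ℝ} (hσ : 0 ≤ σ) (hσδ : 3 * σ + δ < 2) :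
    ∀ᶠ M : ℕ in atTop, (⌈(M : ℝ) ^ σ⌉₊ : ℝ) ^ 3 * (3 * (M : ℝ) ^ (δ - 2)) < 1 := by
  have power_top : Tendsto (fun M : ℕ => (M : ℝ) ^ (2 - δ - 3 * σ)) atTop atTop :=
    (tendsto_rpow_atTop (by linarith)).comp tendsto_natCast_atTop_atTop
  filter_upwards [power_top.eventually_gt_atTop 24, eventually_ge_atTop 1] with M hM M_ge
  have M_ge' : (1 : ℝ) ≤ M := by exact_mod_cast M_ge
  have M_pos : (0 : ℝ) < M := by linarith
  have ceil_le : (⌈(M : ℝ) ^ σ⌉₊ : ℝ) ≤ 2 * (M : ℝ) ^ σ := by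
    linarith [Nat.ceil_lt_add_one (Real.rpow_nonneg M_pos.le σ), Real.one_le_rpow M_ge' hσ]
  calc (⌈(M : ℝ) ^ σ⌉₊ : ℝ) ^ 3 * (3 * (M : ℝ) ^ (δ - 2))
      ≤ (2 * (M : ℝ) ^ σ) ^ 3 * (3 * (M : ℝ) ^ (δ - 2)) := by gcongr
    _ = 24 * ((M : ℝ) ^ (3 * σ) * (M : ℝ) ^ (δ - 2)) := by
      rw [mul_comm 3 σ, Real.rpow_mul M_pos.le]
      norm_cast
      ring
    _ < (M : ℝ) ^ (2 - δ - 3 * σ) * ((M : ℝ) ^ (3 * σ) * (M : ℝ) ^ (δ - 2)) := by gcongr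
    _ = 1 := by
      rw [← Real.rpow_add M_pos, ← Real.rpow_add M_pos]
      ring_nf
      exact Real.rpow_zero _

theorem LogConcaveGrowth.ae_frequently_le_block {f φ φ₁ φ₂ : ℝ → ℝ} {δ X σ : ℝ}
    (h : LogConcaveGrowth f φ φ₁ φ₂ δ X) (hσ : 0 ≤ σ) (hσδ : 3 * σ + δ < 2) :
    ∀ᵐ α : ℝ, ∃ k : ℕ, ∃ᶠ M : ℕ in atTop, (⌈(M : ℝ) ^ σ⌉₊ : ℝ) / 2 ≤
      ‖∑ n ∈ Finset.Ico M (M + ⌈(M : ℝ) ^ σ⌉₊),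
        (fourier ⌊f n⌋ (2 ^ k • (α : UnitAddCircle)) : ℂ)‖ ^ 2 := by
  refine ae_frequently_of_le_measureReal (c := 1 / 24) (E := fun M : ℕ => {x |
    (⌈(M : ℝ) ^ σ⌉₊ : ℝ) / 2 ≤
      ‖∑ n ∈ Finset.Ico M (M + ⌈(M : ℝ) ^ σ⌉₊), (fourier ⌊f n⌋ x : ℂ)‖ ^ 2})
    (fun M => measurableSet_le measurable_const (Continuous.measurable (by fun_prop)))
    (by norm_num) ?_
  filter_upwards [eventually_ceil_rpow_pow_three_mul_lt_one hσ hσδ, eventually_gt_atTop 0,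
    tendsto_natCast_atTop_atTop.eventually_ge_atTop X] with M length_bound M_pos hM
  exact (h.slowlyLogConcave_floor hM).le_measureReal_block (by positivity)
    (Nat.ceil_pos.2 (by positivity)) length_bound

theorem fourier_nsmul_coe (m : ℤ) (q : ℕ) (α : ℝ) :
    (fourier m (q • (α : UnitAddCircle)) : ℂ) =
      fourier (q : ℤ) ((Int.fract ((m : ℝ) * α) : ℝ) : UnitAddCircle) := by
  rw [AddCircle.coe_fract, ← zsmul_eq_mul, AddCircle.coe_zsmul, fourier_apply, fourier_apply,
    natCast_zsmul, smul_comm]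

variable {h : ℤ} {x : ℕ → ℝ}

theorem exists_norm_sum_Ico_fourier_le (hh : h ≠ 0) (hx : ∀ n, x n ∈ Set.Ico 0 1) {M : ℕ}
    (hM : 0 < M) (H : ℕ) : ∃ N ∈ Set.Ico (M - 1) (M + H),
      ‖∑ n ∈ Finset.Ico M (M + H), (fourier h (x n : UnitAddCircle) : ℂ)‖ ≤
        4 * Real.pi * |h| * (N * starDisc N x) := by
  have sum_eq : ∑ n ∈ Finset.Ico M (M + H), (fourier h (x n : UnitAddCircle) : ℂ) =
      ∑ n ∈ Finset.Icc 1 (M + H - 1), (fourier h (x n : UnitAddCircle) : ℂ) -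
        ∑ n ∈ Finset.Icc 1 (M - 1), (fourier h (x n : UnitAddCircle) : ℂ) := by
    rw [Finset.Icc_sub_one_right_eq_Ico_of_not_isMin, Finset.Icc_sub_one_right_eq_Ico_of_not_isMin,
      eq_sub_iff_add_eq', Finset.sum_Ico_consecutive _ hM (by lia)] <;>
    simpa using by lia
  have bound (N : ℕ) := norm_sum_fourier_le_mul_starDisc (N := N) hh hx
  have norm_le := norm_sub_le_of_le (bound (M + H - 1)) (bound (M - 1))
  rw [← sum_eq, ← mul_add] at norm_le
  have double_le {D d : ℝ} (hd : d ≤ D) :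
      2 * Real.pi * |h| * (D + d) ≤ 4 * Real.pi * |h| * D := by
    grw [hd]
    exact (by ring : _ = _).le
  obtain hle | hle := le_total (((M - 1 : ℕ) : ℝ) * starDisc (M - 1) x)
    ((M + H - 1 : ℕ) * starDisc (M + H - 1) x)
  · exact ⟨M + H - 1, ⟨by lia, by lia⟩, norm_le.trans (double_le hle)⟩
  · rw [add_comm (_ * _)] at norm_le
    exact ⟨M - 1, ⟨le_rfl, by lia⟩, norm_le.trans (double_le hle)⟩

theorem frequently_rpow_le_mul_starDisc (hh : h ≠ 0) (hx : ∀ n, x n ∈ Set.Ico 0 1) {σ τ : ℝ}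
    (hσ : σ ∈ Set.Icc 0 1) (hτ : 2 * τ < σ)
    (hblock : ∃ᶠ M : ℕ in atTop, (⌈(M : ℝ) ^ σ⌉₊ : ℝ) / 2 ≤
      ‖∑ n ∈ Finset.Ico M (M + ⌈(M : ℝ) ^ σ⌉₊), (fourier h (x n : UnitAddCircle) : ℂ)‖ ^ 2) :
    ∃ᶠ N : ℕ in atTop, (N : ℝ) ^ τ ≤ N * starDisc N x := by
  set C : ℝ := 4 * Real.pi * |h|
  have : 0 < C := by positivity
  have power_top : Tendsto (fun N : ℕ => (N : ℝ) ^ (σ - 2 * τ)) atTop atTop :=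
    (tendsto_rpow_atTop (by linarith)).comp tendsto_natCast_atTop_atTop
  obtain ⟨N₁, hN₁⟩ := eventually_atTop.1 <|
    (power_top.eventually_ge_atTop (2 ^ σ * (2 * C ^ 2))).and (eventually_gt_atTop 0)
  refine frequently_atTop.2 fun N₀ => ?_
  obtain ⟨M, hM, M_ge⟩ := (hblock.and_eventually (eventually_gt_atTop (max N₀ N₁))).exists
  have M_one_le : (1 : ℝ) ≤ M := by exact_mod_cast (by lia : 1 ≤ M)
  obtain ⟨N, ⟨hMN, hNM⟩, hN⟩ := exists_norm_sum_Ico_fourier_le hh hx (by lia : 0 < M)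
    ⌈(M : ℝ) ^ σ⌉₊
  change _ ≤ C * _ at hN
  obtain ⟨hN_power, N_pos⟩ := hN₁ N (by lia)
  have length_le : ⌈(M : ℝ) ^ σ⌉₊ ≤ M :=
    Nat.ceil_le.2 (Real.rpow_le_self_of_one_le M_one_le hσ.2)
  have N_le : (N : ℝ) ≤ 2 * M := by exact_mod_cast (by lia : N ≤ 2 * M)
  refine ⟨N, by lia, le_of_sq_le_sq ?_ (by have := starDisc_nonneg N x; positivity)⟩
  refine le_of_mul_le_mul_left ?_ (by positivity : 0 < 2 ^ σ * (2 * C ^ 2))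
  calc 2 ^ σ * (2 * C ^ 2) * ((N : ℝ) ^ τ) ^ 2
      ≤ (N : ℝ) ^ (σ - 2 * τ) * ((N : ℝ) ^ τ) ^ 2 := by gcongr
    _ = (N : ℝ) ^ σ := by
      rw [← Real.rpow_mul_natCast N.cast_nonneg, ← Real.rpow_add (by exact_mod_cast N_pos)]
      ring_nf
    _ ≤ (2 * M) ^ σ := by gcongr; exact hσ.1
    _ ≤ 2 ^ σ * ⌈(M : ℝ) ^ σ⌉₊ := by
      rw [Real.mul_rpow two_pos.le M.cast_nonneg]
      gcongr
      exact Nat.le_ceil _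
    _ ≤ 2 ^ σ * (2 * (C * (N * starDisc N x)) ^ 2) := by
      grw [← hN]
      gcongr
      linarith
    _ = 2 ^ σ * (2 * C ^ 2) * (N * starDisc N x) ^ 2 := by ring

end BlockSums

theorem ae_frequently_rpow_le_mul_starDisc {γ β τ : ℝ} (hγ : 0 < γ) (hβ : 1 < β) (hτ : τ < 1 / 3) :
    ∀ᵐ α : ℝ, ∃ᶠ N : ℕ in atTop, (N : ℝ) ^ τ ≤
      N * starDisc N fun n => Int.fract ((⌊Real.exp (γ * Real.log n ^ β)⌋ : ℝ) * α) := by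
  obtain ⟨σ, hσ, hσ_lt⟩ : ∃ σ, max 0 (2 * τ) < σ ∧ σ < 2 / 3 :=
    exists_between (max_lt (by norm_num) (by linarith))
  obtain ⟨δ, δ_pos, hδ⟩ : ∃ δ, 0 < δ ∧ δ < min 1 (2 - 3 * σ) :=
    exists_between (lt_min one_pos (by linarith))
  obtain ⟨hσ_pos, hτσ⟩ := max_lt_iff.1 hσ
  obtain ⟨hδ_one, hδσ⟩ := lt_min_iff.1 hδ
  obtain ⟨φ, φ₁, φ₂, X, growth⟩ := LogConcaveGrowth.exists_exp_rpow_log hγ hβ ⟨δ_pos, hδ_one⟩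
  filter_upwards [growth.ae_frequently_le_block hσ_pos.le (by linarith)] with α ⟨k, hk⟩
  simp only [fourier_nsmul_coe] at hk
  exact frequently_rpow_le_mul_starDisc (h := (2 ^ k : ℕ)) (by positivity)
    (fun n => ⟨Int.fract_nonneg _, Int.fract_lt_one _⟩) ⟨hσ_pos.le, by linarith⟩ hτσ hk

theorem stmt5_general (γ β : ℝ) (hγ : 0 < γ) (hβ : 1 < β)
    (a : ℕ → ℤ) (ha : ∀ n : ℕ, 1 ≤ n → a n = ⌊Real.exp (γ * (Real.log n) ^ β)⌋) :
    ∀ᵐ α ∂(volume : Measure ℝ), ∀ ε > 0, ∃ᶠ N : ℕ in atTop,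
      (N : ℝ) * starDisc N (fun n => Int.fract ((a n : ℝ) * α)) ≥
        (N : ℝ) ^ ((1 : ℝ) / 3 - ε) := by
  have rational_exponents : ∀ᵐ α : ℝ, ∀ τ : ℚ, (τ : ℝ) < 1 / 3 → ∃ᶠ N : ℕ in atTop,
      (N : ℝ) ^ (τ : ℝ) ≤
        N * starDisc N fun n => Int.fract ((⌊Real.exp (γ * Real.log n ^ β)⌋ : ℝ) * α) :=
    ae_all_iff.2 fun τ => eventually_imp_distrib_left.2 fun hτ =>
      ae_frequently_rpow_le_mul_starDisc hγ hβ hτ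
  filter_upwards [rational_exponents] with α hα ε hε
  obtain ⟨τ, hετ, hτ⟩ := exists_rat_btwn (sub_lt_self (1 / 3 : ℝ) hε)
  refine ((hα τ hτ).and_eventually (eventually_ge_atTop 1)).mono fun N ⟨hN, N_ge⟩ => ?_
  calc (N : ℝ) ^ (1 / 3 - ε) ≤ (N : ℝ) ^ (τ : ℝ) :=
      Real.rpow_le_rpow_of_exponent_le (by exact_mod_cast N_ge) hετ.le
    _ ≤ _ := hN
    _ = N * starDisc N fun n => Int.fract ((a n : ℝ) * α) := by
      congr 1
      exact starDisc_congr fun n hn => by rw [ha n (Finset.mem_Icc.1 hn).1]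

theorem stmt5 (γ β : ℝ) (hγ : 0 < γ) (hβ1 : 1 < β) (hβ2 : β ≤ 2)
    (a : ℕ → ℤ) (ha : ∀ n : ℕ, 1 ≤ n → a n = ⌊Real.exp (γ * (Real.log n) ^ β)⌋) :
    ∀ᵐ α ∂(volume : Measure ℝ), ∀ ε > 0, ∃ᶠ N : ℕ in atTop,
      (N : ℝ) * starDisc N (fun n => Int.fract ((a n : ℝ) * α)) ≥
        (N : ℝ) ^ ((7 : ℝ) / 26 - ε) := by
  filter_upwards [stmt5_general γ β hγ hβ1 a ha] with α hα ε hε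
  convert hα (ε + 5 / 78) (by positivity) using 4
  ring
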